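/- Suppose each A_k has full column rank with λ_min(A_k^T A_k) ≥ σ_k² for constants σ_k > 0, and let σ_min := min_k σ_k. Then for every r ≥ 0 the cyclic exact BCD iterates satisfy f(x^{(r+1)}) − f* ≤ R_0 · (1/σ_min) · log(2NK) · (L + L_max) · √(Σ_{k=1}^K σ_k² ‖x_k^{(r+1)} − x_k^{(r)}‖²). -/

import Mathlib

open Finset

/-- Squared Euclidean norm of a vector in `ℝ^n`. -/
noncomputable def sqnorm {n : ℕ} (v : Fin n → ℝ) : ℝ := ∑ i, v i ^ 2

/-- Euclidean inner product on `ℝ^n`. -/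
noncomputable def dotp {n : ℕ} (u v : Fin n → ℝ) : ℝ := ∑ i, u i * v i

/-- `λ_max(AᵀA)` for a real matrix `A`, characterized as the maximum of `‖Av‖²`
over unit vectors `v`. -/
noncomputable def lamMaxQ {M N : ℕ} (A : Matrix (Fin M) (Fin N) ℝ) : ℝ :=
  sSup {r : ℝ | ∃ v : Fin N → ℝ, sqnorm v = 1 ∧ r = sqnorm (A.mulVec v)}

/-- `λ_min(AᵀA)` for a real matrix `A`, characterized as the minimum of `‖Av‖²`
over unit vectors `v`. -/
noncomputable def lamMinQ {M N : ℕ} (A : Matrix (Fin M) (Fin N) ℝ) : ℝ :=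
  sInf {r : ℝ | ∃ v : Fin N → ℝ, sqnorm v = 1 ∧ r = sqnorm (A.mulVec v)}

/-- `λ_max(AᵀA)` for the concatenated matrix `A = [A_1 ⋯ A_K]`, acting on block
vectors. -/
noncomputable def lamMaxBlock {K M N : ℕ} (A : Fin K → Matrix (Fin M) (Fin N) ℝ) : ℝ :=
  sSup {r : ℝ | ∃ v : Fin K → Fin N → ℝ, (∑ k, sqnorm (v k)) = 1 ∧
    r = sqnorm (∑ k, (A k).mulVec (v k))}

/-- Maximum of a finite family of reals indexed by `Fin K`, `K ≥ 1`. -/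
noncomputable def maxOf {K : ℕ} (hK : 1 ≤ K) (P : Fin K → ℝ) : ℝ :=
  Finset.univ.sup' (Finset.univ_nonempty_iff.mpr ⟨⟨0, hK⟩⟩) P

/-- Minimum of a finite family of reals indexed by `Fin K`, `K ≥ 1`. -/
noncomputable def minOf {K : ℕ} (hK : 1 ≤ K) (P : Fin K → ℝ) : ℝ :=
  Finset.univ.inf' (Finset.univ_nonempty_iff.mpr ⟨⟨0, hK⟩⟩) P

/-- The residual `Σ_k A_k x_k − b`. -/
noncomputable def resid {K M N : ℕ} (A : Fin K → Matrix (Fin M) (Fin N) ℝ)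
    (b : Fin M → ℝ) (x : Fin K → Fin N → ℝ) : Fin M → ℝ :=
  (∑ k, (A k).mulVec (x k)) - b

/-- The smooth part `g(x) = (1/2)‖Σ_k A_k x_k − b‖²`. -/
noncomputable def gq {K M N : ℕ} (A : Fin K → Matrix (Fin M) (Fin N) ℝ)
    (b : Fin M → ℝ) (x : Fin K → Fin N → ℝ) : ℝ :=
  (1 / 2) * sqnorm (resid A b x)

/-- The objective `f(x) = g(x) + Σ_k h_k(x_k)`. -/
noncomputable def fq {K M N : ℕ} (A : Fin K → Matrix (Fin M) (Fin N) ℝ)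
    (b : Fin M → ℝ) (h : Fin K → (Fin N → ℝ) → ℝ) (x : Fin K → Fin N → ℝ) : ℝ :=
  gq A b x + ∑ k, h k (x k)

/-- The partial gradient `∇_k g(x) = A_kᵀ (Σ_j A_j x_j − b)`. -/
noncomputable def gradk {K M N : ℕ} (A : Fin K → Matrix (Fin M) (Fin N) ℝ)
    (b : Fin M → ℝ) (x : Fin K → Fin N → ℝ) (k : Fin K) : Fin N → ℝ :=
  ((A k).transpose).mulVec (resid A b x)

/-- The intermediate point `w_k^{(r+1)}` of the cycle: blocks `j < k` come from
`x^{(r+1)} = xp`, the remaining blocks from `x^{(r)} = x`. -/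
def wpt {K N : ℕ} (x xp : Fin K → Fin N → ℝ) (k : Fin K) : Fin K → Fin N → ℝ :=
  fun j => if j < k then xp j else x j

/-- The objective of the `k`-th BCPG prox subproblem at the point
`w_k^{(r+1)} = wpt x xp k`, evaluated at candidate block `y`. -/
noncomputable def bcpgObj {K M N : ℕ} (A : Fin K → Matrix (Fin M) (Fin N) ℝ)
    (b : Fin M → ℝ) (h : Fin K → (Fin N → ℝ) → ℝ) (P : Fin K → ℝ)
    (x xp : Fin K → Fin N → ℝ) (k : Fin K) (y : Fin N → ℝ) : ℝ :=
  dotp (gradk A b (wpt x xp k) k) (y - x k) + (P k / 2) * sqnorm (y - x k) + h k y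

/-- One cycle of cyclic BCPG: `xp = x^{(r+1)}` is obtained from `x = x^{(r)}`
by letting, for `k = 1,…,K`, the `k`-th block minimize the prox subproblem at
`w_k^{(r+1)}` over `X_k`. -/
def BCPGStep {K M N : ℕ} (A : Fin K → Matrix (Fin M) (Fin N) ℝ)
    (b : Fin M → ℝ) (h : Fin K → (Fin N → ℝ) → ℝ)
    (X : Fin K → Set (Fin N → ℝ)) (P : Fin K → ℝ)
    (x xp : Fin K → Fin N → ℝ) : Prop :=
  ∀ k : Fin K, xp k ∈ X k ∧ ∀ y ∈ X k,
    bcpgObj A b h P x xp k (xp k) ≤ bcpgObj A b h P x xp k y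

/-- One cycle of cyclic exact BCD: `xp = x^{(r+1)}` is obtained from
`x = x^{(r)}` by letting, for `k = 1,…,K`, the `k`-th block minimize
`f(x_1^{(r+1)},…,x_{k−1}^{(r+1)}, ·, x_{k+1}^{(r)},…,x_K^{(r)})` over `X_k`. -/
def BCDStep {K M N : ℕ} (A : Fin K → Matrix (Fin M) (Fin N) ℝ)
    (b : Fin M → ℝ) (h : Fin K → (Fin N → ℝ) → ℝ)
    (X : Fin K → Set (Fin N → ℝ))
    (x xp : Fin K → Fin N → ℝ) : Prop :=
  ∀ k : Fin K, xp k ∈ X k ∧ ∀ y ∈ X k,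
    fq A b h (Function.update (wpt x xp k) k (xp k)) ≤
      fq A b h (Function.update (wpt x xp k) k y)

/-!
Let `ρ` be the residual at `x⁺ = x^{(r+1)}` and `ρ_k` the residual after the `k`-th block update.
Convexity of `g` at `x⁺`, together with the variational inequality of each block subproblem, gives
for every feasible `z`

`f(x⁺) - f(z) ≤ ∑_k ⟪ρ - ρ_k, A_k (x⁺_k - z_k)⟫`
`            = ∑_{k < j} ⟪A_k (x⁺_k - z_k), A_j (x⁺_j - x_j)⟫`,

because blocks `j > k` are the ones updated after the `k`-th. The right-hand side is a strictly
upper triangular truncation of a bilinear form. Cutting the index set in half leaves two truncated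
forms of half the size and one rectangular block; by polarization the latter is at most
`(L / 2) ‖x⁺ - z‖ ‖x⁺ - x‖`, and by Cauchy–Schwarz so is the total over each dyadic level. The
`⌈log₂ K⌉ ≤ 2 log (2K)` levels give the logarithmic factor.
-/

section Sqnorm

variable {n : ℕ}

lemma sqnorm_eq_dotProduct (v : Fin n → ℝ) : sqnorm v = v ⬝ᵥ v := by
  simp only [sqnorm, dotProduct, sq]

lemma sqnorm_nonneg (v : Fin n → ℝ) : 0 ≤ sqnorm v :=
  Finset.sum_nonneg fun i _ => sq_nonneg (v i)

lemma sum_sqnorm_nonneg {ι : Type*} (s : Finset ι) (v : ι → Fin n → ℝ) :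
    0 ≤ ∑ k ∈ s, sqnorm (v k) :=
  Finset.sum_nonneg fun k _ => sqnorm_nonneg (v k)

lemma sqnorm_add (u v : Fin n → ℝ) :
    sqnorm (u + v) = sqnorm u + 2 * (u ⬝ᵥ v) + sqnorm v := by
  simp only [sqnorm_eq_dotProduct, add_dotProduct, dotProduct_add, dotProduct_comm v u]
  ring

lemma sqnorm_sub (u v : Fin n → ℝ) :
    sqnorm (u - v) = sqnorm u - 2 * (u ⬝ᵥ v) + sqnorm v := by
  simp only [sqnorm_eq_dotProduct, sub_dotProduct, dotProduct_sub, dotProduct_comm v u]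
  ring

lemma sqnorm_smul (t : ℝ) (v : Fin n → ℝ) : sqnorm (t • v) = t ^ 2 * sqnorm v := by
  simp only [sqnorm_eq_dotProduct, smul_dotProduct, dotProduct_smul, smul_eq_mul]
  ring

lemma four_mul_dotProduct_le_sqnorm_add (u v : Fin n → ℝ) :
    4 * (u ⬝ᵥ v) ≤ sqnorm (u + v) := by
  linarith [sqnorm_nonneg (u - v), sqnorm_add u v, sqnorm_sub u v]

lemma half_sqnorm_sub_half_sqnorm_le (u v : Fin n → ℝ) :
    1 / 2 * sqnorm u - 1 / 2 * sqnorm v ≤ u ⬝ᵥ (u - v) := by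
  rw [dotProduct_sub, ← sqnorm_eq_dotProduct]
  linarith [sqnorm_nonneg (u - v), sqnorm_sub u v]

end Sqnorm

section LamMax

variable {K M N : ℕ}

lemma lamMaxQ_nonneg (A : Matrix (Fin M) (Fin N) ℝ) : 0 ≤ lamMaxQ A := by
  refine Real.sSup_nonneg ?_
  rintro _ ⟨v, -, rfl⟩
  exact sqnorm_nonneg _

variable (A : Fin K → Matrix (Fin M) (Fin N) ℝ)

lemma lamMaxBlock_nonneg : 0 ≤ lamMaxBlock A := by
  refine Real.sSup_nonneg ?_
  rintro _ ⟨v, -, rfl⟩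
  exact sqnorm_nonneg _

lemma sqnorm_sum_mulVec_le_frobenius (v : Fin K → Fin N → ℝ) :
    sqnorm (∑ k, (A k).mulVec (v k)) ≤
      (∑ i, ∑ p : Fin K × Fin N, A p.1 i p.2 ^ 2) * ∑ k, sqnorm (v k) := by
  have hrow : ∀ i, (∑ k, (A k).mulVec (v k)) i = ∑ p : Fin K × Fin N, A p.1 i p.2 * v p.1 p.2 :=
    fun i => by
      rw [Fintype.sum_prod_type, Finset.sum_apply]
      rfl
  have hv : ∑ k, sqnorm (v k) = ∑ p : Fin K × Fin N, v p.1 p.2 ^ 2 := by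
    rw [Fintype.sum_prod_type]
    rfl
  rw [sqnorm, hv, Finset.sum_mul]
  refine Finset.sum_le_sum fun i _ => ?_
  rw [hrow]
  exact Finset.sum_mul_sq_le_sq_mul_sq _ _ _

lemma bddAbove_sqnorm_sum_mulVec :
    BddAbove {r : ℝ | ∃ v : Fin K → Fin N → ℝ, (∑ k, sqnorm (v k)) = 1 ∧
      r = sqnorm (∑ k, (A k).mulVec (v k))} := by
  refine ⟨∑ i, ∑ p : Fin K × Fin N, A p.1 i p.2 ^ 2, ?_⟩
  rintro _ ⟨v, hv, rfl⟩
  simpa only [hv, mul_one] using sqnorm_sum_mulVec_le_frobenius A v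

lemma sqnorm_sum_mulVec_le (v : Fin K → Fin N → ℝ) :
    sqnorm (∑ k, (A k).mulVec (v k)) ≤ lamMaxBlock A * ∑ k, sqnorm (v k) := by
  rcases (sum_sqnorm_nonneg univ v).eq_or_lt with hzero | hpos
  · simpa only [← hzero, mul_zero] using sqnorm_sum_mulVec_le_frobenius A v
  · set s := ∑ k, sqnorm (v k) with hs
    have hscale : (√s)⁻¹ ^ 2 = s⁻¹ := by rw [inv_pow, Real.sq_sqrt hpos.le]
    have hunit : ∑ k, sqnorm ((√s)⁻¹ • v k) = 1 := by
      simp only [sqnorm_smul, ← Finset.mul_sum, hscale, ← hs, inv_mul_cancel₀ hpos.ne']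
    have hle : sqnorm (∑ k, (A k).mulVec ((√s)⁻¹ • v k)) ≤ lamMaxBlock A :=
      le_csSup (bddAbove_sqnorm_sum_mulVec A) ⟨_, hunit, rfl⟩
    simp only [Matrix.mulVec_smul, ← Finset.smul_sum, sqnorm_smul, hscale] at hle
    rwa [inv_mul_le_iff₀ hpos, mul_comm] at hle

variable {S T : Finset (Fin K)}

lemma sqnorm_sum_add_sum_mulVec_le (hST : Disjoint S T) (u v : Fin K → Fin N → ℝ) :
    sqnorm (∑ k ∈ S, (A k).mulVec (u k) + ∑ k ∈ T, (A k).mulVec (v k)) ≤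
      lamMaxBlock A * (∑ k ∈ S, sqnorm (u k) + ∑ k ∈ T, sqnorm (v k)) := by
  let w : Fin K → Fin N → ℝ := fun k => (if k ∈ S then u k else 0) + if k ∈ T then v k else 0
  have hmulVec : ∑ k, (A k).mulVec (w k) =
      ∑ k ∈ S, (A k).mulVec (u k) + ∑ k ∈ T, (A k).mulVec (v k) := by
    simp [w, Matrix.mulVec_add, Finset.sum_add_distrib, apply_ite (Matrix.mulVec _)]
  have hsqnorm : ∑ k, sqnorm (w k) = ∑ k ∈ S, sqnorm (u k) + ∑ k ∈ T, sqnorm (v k) := by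
    have hblock : ∀ k, sqnorm (w k) =
        (if k ∈ S then sqnorm (u k) else 0) + if k ∈ T then sqnorm (v k) else 0 := fun k => by
      by_cases hS : k ∈ S
      · simp [w, hS, Finset.disjoint_left.1 hST hS]
      · by_cases hT : k ∈ T <;> simp [w, hS, hT, sqnorm]
    simp only [hblock, Finset.sum_add_distrib, Finset.sum_ite_mem, Finset.univ_inter]
  rw [← hmulVec, ← hsqnorm]
  exact sqnorm_sum_mulVec_le A w

lemma sum_sum_mulVec_dotProduct_mulVec_le (hST : Disjoint S T) (u v : Fin K → Fin N → ℝ) :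
    ∑ k ∈ S, ∑ j ∈ T, (A k).mulVec (u k) ⬝ᵥ (A j).mulVec (v j) ≤
      lamMaxBlock A / 2 * (√(∑ k ∈ S, sqnorm (u k)) * √(∑ k ∈ T, sqnorm (v k))) := by
  simp only [← dotProduct_sum, ← sum_dotProduct]
  set p := ∑ k ∈ S, (A k).mulVec (u k) with hp
  set q := ∑ j ∈ T, (A j).mulVec (v j)
  have hα := sum_sqnorm_nonneg S u
  have hβ := sum_sqnorm_nonneg T v
  set α := ∑ k ∈ S, sqnorm (u k) with hα_def
  set β := ∑ k ∈ T, sqnorm (v k)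
  have hquad : ∀ t : ℝ,
      0 ≤ lamMaxBlock A * α * (t * t) + -(4 * (p ⬝ᵥ q)) * t + lamMaxBlock A * β := fun t => by
    have hscaled := sqnorm_sum_add_sum_mulVec_le A hST (fun k => t • u k) v
    simp only [Matrix.mulVec_smul, ← Finset.smul_sum, sqnorm_smul, ← Finset.mul_sum, ← hp,
      ← hα_def] at hscaled
    have hpolar := four_mul_dotProduct_le_sqnorm_add (t • p) q
    rw [smul_dotProduct, smul_eq_mul] at hpolar
    linarith
  have hdiscrim := discrim_le_zero hquad
  have hL := lamMaxBlock_nonneg A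
  refine le_of_abs_le (abs_le_of_sq_le_sq ?_ (by positivity))
  rw [mul_pow, mul_pow, Real.sq_sqrt hα, Real.sq_sqrt hβ]
  rw [discrim] at hdiscrim
  linarith

end LamMax

section TriangularTruncation

lemma sqrt_mul_sqrt_add_sqrt_mul_sqrt_le {a b c d : ℝ}
    (ha : 0 ≤ a) (hb : 0 ≤ b) (hc : 0 ≤ c) (hd : 0 ≤ d) :
    √a * √c + √b * √d ≤ √(a + b) * √(c + d) := by
  simpa using
    Real.sum_sqrt_mul_sqrt_le (f := ![a, b]) (g := ![c, d]) univ
      (Fin.forall_fin_two.2 ⟨ha, hb⟩) (Fin.forall_fin_two.2 ⟨hc, hd⟩)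

variable {ι : Type*} [LinearOrder ι]

lemma exists_subset_card_eq_forall_lt (I : Finset ι) {n : ℕ} (hn : n ≤ #I) :
    ∃ S ⊆ I, #S = n ∧ ∀ k ∈ S, ∀ j ∈ I \ S, k < j := by
  induction n with
  | zero => exact ⟨∅, Finset.empty_subset I, rfl, by simp⟩
  | succ n ih =>
    obtain ⟨S, hSI, hcard, hlt⟩ := ih (n.le_succ.trans hn)
    have hne : (I \ S).Nonempty := by
      rw [← Finset.card_pos, Finset.card_sdiff_of_subset hSI]
      omega
    have hmin := Finset.min'_mem _ hne
    set a := (I \ S).min' hne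
    obtain ⟨haI, haS⟩ := Finset.mem_sdiff.1 hmin
    refine ⟨insert a S, Finset.insert_subset haI hSI, ?_, ?_⟩
    · rw [Finset.card_insert_of_notMem haS, hcard]
    · intro k hk j hj
      obtain ⟨hjI, hja, hjS⟩ : j ∈ I ∧ j ≠ a ∧ j ∉ S := by simpa using hj
      have hj' := Finset.mem_sdiff.2 ⟨hjI, hjS⟩
      rcases Finset.mem_insert.1 hk with rfl | hkS
      · exact (Finset.min'_le _ j hj').lt_of_ne' hja
      · exact hlt k hkS j hj'

lemma sum_sum_lt_union {R : Type*} [AddCommMonoid R] (c : ι → ι → R) {S T : Finset ι}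
    (hlt : ∀ k ∈ S, ∀ j ∈ T, k < j) :
    ∑ k ∈ S ∪ T, ∑ j ∈ S ∪ T with k < j, c k j =
      (∑ k ∈ S, ∑ j ∈ S with k < j, c k j) + (∑ k ∈ S, ∑ j ∈ T, c k j) +
        ∑ k ∈ T, ∑ j ∈ T with k < j, c k j := by
  have hdisj : Disjoint S T := Finset.disjoint_left.2 fun k hS hT => (hlt k hS k hT).false
  have hlower : ∀ k ∈ S, ∑ j ∈ S ∪ T with k < j, c k j =
      ∑ j ∈ S with k < j, c k j + ∑ j ∈ T, c k j := fun k hk => by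
    rw [Finset.filter_union, Finset.filter_true_of_mem (hlt k hk),
      Finset.sum_union (hdisj.mono_left (Finset.filter_subset _ S))]
  have hupper : ∀ k ∈ T, ∑ j ∈ S ∪ T with k < j, c k j = ∑ j ∈ T with k < j, c k j :=
    fun k hk => by
      rw [Finset.filter_union,
        Finset.filter_false_of_mem fun j hj => (hlt j hj k hk).not_gt, Finset.empty_union]
  rw [Finset.sum_union hdisj, Finset.sum_congr rfl hlower, Finset.sum_congr rfl hupper,
    Finset.sum_add_distrib]

lemma sum_sum_lt_le_of_card_le_two_pow {c : ι → ι → ℝ} {α β : ι → ℝ} {C : ℝ} (hC : 0 ≤ C)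
    (hα : ∀ k, 0 ≤ α k) (hβ : ∀ k, 0 ≤ β k)
    (hc : ∀ S T : Finset ι, Disjoint S T →
      ∑ k ∈ S, ∑ j ∈ T, c k j ≤ C * (√(∑ k ∈ S, α k) * √(∑ k ∈ T, β k)))
    {m : ℕ} {I : Finset ι} (hI : #I ≤ 2 ^ m) :
    ∑ k ∈ I, ∑ j ∈ I with k < j, c k j ≤ m * C * (√(∑ k ∈ I, α k) * √(∑ k ∈ I, β k)) := by
  induction m generalizing I with
  | zero =>
    have heq := Finset.card_le_one.1 hI
    rw [Finset.sum_eq_zero fun k hk => ?_]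
    · simp
    · rw [Finset.filter_false_of_mem fun j hj => (heq k hk j hj).not_lt, Finset.sum_empty]
  | succ m ih =>
    obtain ⟨S, hSI, hcard, hlt⟩ := exists_subset_card_eq_forall_lt I (Nat.div_le_self (#I) 2)
    have hTcard := Finset.card_sdiff_of_subset hSI
    have hdisj : Disjoint S (I \ S) := Finset.disjoint_sdiff
    have hunion : S ∪ (I \ S) = I := Finset.union_sdiff_of_subset hSI
    set T := I \ S
    have hS := ih (I := S) (by omega)
    have hT := ih (I := T) (by omega)
    have hrect := hc S T hdisj
    rw [← hunion, sum_sum_lt_union c hlt, Finset.sum_union hdisj, Finset.sum_union hdisj]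
    have hαS : 0 ≤ ∑ k ∈ S, α k := Finset.sum_nonneg fun k _ => hα k
    have hαT : 0 ≤ ∑ k ∈ T, α k := Finset.sum_nonneg fun k _ => hα k
    have hβS : 0 ≤ ∑ k ∈ S, β k := Finset.sum_nonneg fun k _ => hβ k
    have hβT : 0 ≤ ∑ k ∈ T, β k := Finset.sum_nonneg fun k _ => hβ k
    have hhalves := mul_le_mul_of_nonneg_left
      (sqrt_mul_sqrt_add_sqrt_mul_sqrt_le hαS hαT hβS hβT) (mul_nonneg m.cast_nonneg hC)
    have hmono : √(∑ k ∈ S, α k) * √(∑ k ∈ T, β k) ≤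
        √(∑ k ∈ S, α k + ∑ k ∈ T, α k) * √(∑ k ∈ S, β k + ∑ k ∈ T, β k) := by
      gcongr <;> linarith
    have hblock := hrect.trans (mul_le_mul_of_nonneg_left hmono hC)
    push_cast
    linarith

lemma clog_two_le_two_mul_log {n : ℕ} (hn : 1 ≤ n) :
    (Nat.clog 2 n : ℝ) ≤ 2 * Real.log (2 * n) := by
  have hn' : (1 : ℝ) ≤ n := by exact_mod_cast hn
  have hlog2 := Real.log_two_gt_d9
  have hlog := Real.log_nonneg hn'
  have hlogb : 0 ≤ Real.logb 2 n := Real.logb_nonneg (by norm_num) hn'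
  rw [Real.log_mul two_ne_zero (by positivity)]
  calc (Nat.clog 2 n : ℝ) = ⌈Real.logb 2 n⌉₊ := by
        exact_mod_cast (Real.natCeil_logb_natCast 2 n).symm
    _ ≤ Real.log n / Real.log 2 + 1 := (Nat.ceil_lt_add_one hlogb).le
    _ ≤ 2 * (Real.log 2 + Real.log n) := by
        have : Real.log n / Real.log 2 ≤ 2 * Real.log n := by
          rw [div_le_iff₀ (by linarith)]
          nlinarith
        linarith

variable {K M N : ℕ}

lemma sum_sum_lt_mulVec_dotProduct_mulVec_le (hK : 1 ≤ K)
    (A : Fin K → Matrix (Fin M) (Fin N) ℝ) (u v : Fin K → Fin N → ℝ) :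
    ∑ k, ∑ j with k < j, (A k).mulVec (u k) ⬝ᵥ (A j).mulVec (v j) ≤
      Real.log (2 * K) * lamMaxBlock A * (√(∑ k, sqnorm (u k)) * √(∑ k, sqnorm (v k))) := by
  have hL := lamMaxBlock_nonneg A
  have hcard : #(univ : Finset (Fin K)) ≤ 2 ^ Nat.clog 2 K := by
    simpa using Nat.le_pow_clog one_lt_two K
  calc _ ≤ (Nat.clog 2 K : ℝ) * (lamMaxBlock A / 2) *
        (√(∑ k, sqnorm (u k)) * √(∑ k, sqnorm (v k))) :=
        sum_sum_lt_le_of_card_le_two_pow (by positivity) (fun k => sqnorm_nonneg (u k))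
          (fun k => sqnorm_nonneg (v k))
          (fun _ _ hST => sum_sum_mulVec_dotProduct_mulVec_le A hST u v) hcard
    _ ≤ 2 * Real.log (2 * K) * (lamMaxBlock A / 2) *
        (√(∑ k, sqnorm (u k)) * √(∑ k, sqnorm (v k))) := by
        gcongr
        exact clog_two_le_two_mul_log hK
    _ = _ := by ring

end TriangularTruncation

section VariationalInequality

lemma nonneg_of_forall_nonneg_add_mul {a d : ℝ}
    (h : ∀ t : ℝ, 0 < t → t ≤ 1 → 0 ≤ a + t * d) : 0 ≤ a := by
  have hlim : Filter.Tendsto (fun t : ℝ => a + t * d) (nhdsWithin 0 (Set.Ioi 0)) (nhds a) := by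
    have hcont : Continuous fun t : ℝ => a + t * d := by fun_prop
    simpa using (hcont.tendsto 0).mono_left nhdsWithin_le_nhds
  refine ge_of_tendsto hlim ?_
  filter_upwards [Ioc_mem_nhdsGT one_pos] with t ht using h t ht.1 ht.2

lemma dotProduct_mulVec_add_nonneg_of_isMinOn {M N : ℕ} {A : Matrix (Fin M) (Fin N) ℝ}
    {ρ : Fin M → ℝ} {X : Set (Fin N → ℝ)} {h : (Fin N → ℝ) → ℝ} (hh : ConvexOn ℝ X h)
    {x y : Fin N → ℝ} (hx : x ∈ X) (hy : y ∈ X)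
    (hmin : IsMinOn (fun z => 1 / 2 * sqnorm (ρ + A.mulVec (z - x)) + h z) X x) :
    0 ≤ ρ ⬝ᵥ A.mulVec (y - x) + (h y - h x) := by
  refine nonneg_of_forall_nonneg_add_mul (d := 1 / 2 * sqnorm (A.mulVec (y - x)))
    fun t ht ht1 => le_of_mul_le_mul_left ?_ ht
  have hsum : 1 - t + t = 1 := sub_add_cancel 1 t
  have hmin_t := isMinOn_iff.1 hmin _ (hh.1 hx hy (sub_nonneg.2 ht1) ht.le hsum)
  have hconv := hh.2 hx hy (sub_nonneg.2 ht1) ht.le hsum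
  have hstep : (1 - t) • x + t • y - x = t • (y - x) := by module
  simp only [hstep, sub_self, Matrix.mulVec_zero, add_zero, Matrix.mulVec_smul, sqnorm_add,
    sqnorm_smul, dotProduct_smul, smul_eq_mul] at hmin_t hconv
  linarith

end VariationalInequality

section BlockObjective

variable {K M N : ℕ} (A : Fin K → Matrix (Fin M) (Fin N) ℝ) (b : Fin M → ℝ)
  (h : Fin K → (Fin N → ℝ) → ℝ)

lemma resid_sub_resid (x y : Fin K → Fin N → ℝ) :
    resid A b x - resid A b y = ∑ k, (A k).mulVec (x k - y k) := by
  simp only [resid, Matrix.mulVec_sub, Finset.sum_sub_distrib, sub_sub_sub_cancel_right]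

lemma resid_update (w : Fin K → Fin N → ℝ) (k : Fin K) (y z : Fin N → ℝ) :
    resid A b (Function.update w k y) =
      resid A b (Function.update w k z) + (A k).mulVec (y - z) := by
  rw [← sub_eq_iff_eq_add', resid_sub_resid, Fintype.sum_eq_single k fun j hj => ?_]
  · simp only [Function.update_self]
  · simp only [Function.update_of_ne hj, sub_self, Matrix.mulVec_zero]

lemma fq_update (w : Fin K → Fin N → ℝ) (k : Fin K) (y z : Fin N → ℝ) :
    fq A b h (Function.update w k y) =
      1 / 2 * sqnorm (resid A b (Function.update w k z) + (A k).mulVec (y - z)) + h k y +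
        ∑ j ∈ univ \ {k}, h j (w j) := by
  simp only [fq, gq, resid_update A b w k y z, Function.apply_update h,
    Finset.sum_update_of_mem (Finset.mem_univ k), add_assoc]

lemma fq_sub_fq_le (x z : Fin K → Fin N → ℝ) :
    fq A b h x - fq A b h z ≤
      ∑ k, (resid A b x ⬝ᵥ (A k).mulVec (x k - z k) + (h k (x k) - h k (z k))) := by
  have hquad := half_sqnorm_sub_half_sqnorm_le (resid A b x) (resid A b z)
  rw [resid_sub_resid, dotProduct_sum] at hquad
  simp only [fq, gq, Finset.sum_add_distrib, Finset.sum_sub_distrib]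
  linarith

end BlockObjective

section Cycle

variable {K N : ℕ} (x xp : Fin K → Fin N → ℝ)

/-- The state of a cycle from `x` to `xp` once its first `n` blocks have been updated. The count
`n` is a natural number, not a block index, so that both endpoints `n = 0` and `n = K` of the cycle
are covered; the `w_k` of the paper is the case where `n` is the (zero-based) index `k`. -/
def partialCycle (n : ℕ) : Fin K → Fin N → ℝ :=
  fun j => if j.val < n then xp j else x j

lemma partialCycle_zero : partialCycle x xp 0 = x := by
  funext j
  simp [partialCycle]

lemma partialCycle_last : partialCycle x xp K = xp := by
  funext j
  simp [partialCycle]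

lemma update_wpt_old (k : Fin K) :
    Function.update (wpt x xp k) k (x k) = partialCycle x xp k := by
  funext j
  rcases eq_or_ne j k with rfl | hj
  · simp [partialCycle]
  · simp [partialCycle, wpt, hj]

lemma update_wpt_new (k : Fin K) :
    Function.update (wpt x xp k) k (xp k) = partialCycle x xp (k + 1) := by
  funext j
  rcases eq_or_ne j k with rfl | hj
  · simp [partialCycle]
  · simp [partialCycle, wpt, hj, hj.le_iff_lt]

lemma resid_sub_resid_partialCycle {M : ℕ} (A : Fin K → Matrix (Fin M) (Fin N) ℝ)
    (b : Fin M → ℝ) (k : Fin K) :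
    resid A b xp - resid A b (partialCycle x xp (k + 1)) =
      ∑ j with k < j, (A j).mulVec (xp j - x j) := by
  rw [resid_sub_resid, Finset.sum_filter]
  refine Finset.sum_congr rfl fun j _ => ?_
  rcases le_or_gt j k with hj | hj
  · simp [partialCycle, hj, hj.not_gt]
  · simp [partialCycle, hj, hj.not_ge]

end Cycle

namespace BCDStep

variable {K M N : ℕ} {A : Fin K → Matrix (Fin M) (Fin N) ℝ} {b : Fin M → ℝ}
  {h : Fin K → (Fin N → ℝ) → ℝ} {X : Fin K → Set (Fin N → ℝ)} {x xp : Fin K → Fin N → ℝ}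

lemma fq_le (hs : BCDStep A b h X x xp) (hx : ∀ k, x k ∈ X k) :
    fq A b h xp ≤ fq A b h x := by
  have hpartial : ∀ n ≤ K, fq A b h (partialCycle x xp n) ≤ fq A b h x := by
    intro n
    induction n with
    | zero => simp [partialCycle_zero]
    | succ n ih =>
      intro hn
      have hblock := (hs ⟨n, hn⟩).2 _ (hx ⟨n, hn⟩)
      rw [update_wpt_new, update_wpt_old] at hblock
      exact hblock.trans (ih (Nat.le_of_succ_le hn))
  simpa only [partialCycle_last] using hpartial K le_rfl

lemma resid_dotProduct_add_nonneg (hs : BCDStep A b h X x xp) {k : Fin K}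
    (hh : ConvexOn ℝ (X k) (h k)) {y : Fin N → ℝ} (hy : y ∈ X k) :
    0 ≤ resid A b (partialCycle x xp (k + 1)) ⬝ᵥ (A k).mulVec (y - xp k) +
      (h k y - h k (xp k)) := by
  obtain ⟨hxp, hle⟩ := hs k
  refine dotProduct_mulVec_add_nonneg_of_isMinOn hh hxp hy (isMinOn_iff.2 fun z hz => ?_)
  have hfq := hle z hz
  rw [fq_update A b h _ k z (xp k), fq_update A b h _ k (xp k) (xp k), update_wpt_new] at hfq
  exact le_of_add_le_add_right hfq

lemma fq_sub_fq_le_sum_sum_lt (hs : BCDStep A b h X x xp) (hh : ∀ k, ConvexOn ℝ (X k) (h k))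
    {z : Fin K → Fin N → ℝ} (hz : ∀ k, z k ∈ X k) :
    fq A b h xp - fq A b h z ≤
      ∑ k, ∑ j with k < j, (A k).mulVec (xp k - z k) ⬝ᵥ (A j).mulVec (xp j - x j) := by
  refine (fq_sub_fq_le A b h xp z).trans (Finset.sum_le_sum fun k _ => ?_)
  have hopt := hs.resid_dotProduct_add_nonneg (hh k) (hz k)
  rw [← neg_sub (xp k), Matrix.mulVec_neg, dotProduct_neg] at hopt
  rw [← dotProduct_sum, ← resid_sub_resid_partialCycle x xp A b, dotProduct_comm _ (_ - _),
    sub_dotProduct]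
  linarith

lemma fq_sub_fq_le_log_mul (hK : 1 ≤ K) (hs : BCDStep A b h X x xp)
    (hh : ∀ k, ConvexOn ℝ (X k) (h k)) {z : Fin K → Fin N → ℝ} (hz : ∀ k, z k ∈ X k) :
    fq A b h xp - fq A b h z ≤
      Real.log (2 * K) * lamMaxBlock A *
        (√(∑ k, sqnorm (xp k - z k)) * √(∑ k, sqnorm (xp k - x k))) :=
  (hs.fq_sub_fq_le_sum_sum_lt hh hz).trans
    (sum_sum_lt_mulVec_dotProduct_mulVec_le hK A (fun k => xp k - z k) fun k => xp k - x k)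

lemma iterate_mem {x : ℕ → Fin K → Fin N → ℝ} (hx0 : ∀ k, x 0 k ∈ X k)
    (hstep : ∀ r, BCDStep A b h X (x r) (x (r + 1))) : ∀ r k, x r k ∈ X k
  | 0 => hx0
  | r + 1 => fun k => (hstep r k).1

lemma antitone_fq_iterate {x : ℕ → Fin K → Fin N → ℝ} (hx0 : ∀ k, x 0 k ∈ X k)
    (hstep : ∀ r, BCDStep A b h X (x r) (x (r + 1))) : Antitone fun r => fq A b h (x r) :=
  antitone_nat_of_succ_le fun r => (hstep r).fq_le (iterate_mem hx0 hstep r)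

end BCDStep

section Extrema

variable {K : ℕ} (hK : 1 ≤ K)

lemma minOf_pos {P : Fin K → ℝ} (hP : ∀ k, 0 < P k) : 0 < minOf hK P :=
  (Finset.lt_inf'_iff _).2 fun k _ => hP k

lemma maxOf_nonneg {P : Fin K → ℝ} (hP : ∀ k, 0 ≤ P k) : 0 ≤ maxOf hK P :=
  (hP ⟨0, hK⟩).trans (Finset.le_sup' P (Finset.mem_univ _))

lemma sqrt_sum_le_one_div_minOf_mul {σ a : Fin K → ℝ} (hσ : ∀ k, 0 < σ k) (ha : ∀ k, 0 ≤ a k) :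
    √(∑ k, a k) ≤ 1 / minOf hK σ * √(∑ k, σ k ^ 2 * a k) := by
  have hmin := minOf_pos hK hσ
  rw [one_div, ← div_eq_inv_mul, le_div_iff₀ hmin]
  refine Real.le_sqrt_of_sq_le ?_
  rw [mul_pow, Real.sq_sqrt (Finset.sum_nonneg fun k _ => ha k), mul_comm, Finset.mul_sum]
  refine Finset.sum_le_sum fun k _ => mul_le_mul_of_nonneg_right ?_ (ha k)
  exact pow_le_pow_left₀ hmin.le (Finset.inf'_le σ (Finset.mem_univ k)) 2

end Extrema

theorem bcd_cost_to_go_col_rank_general {K M N : ℕ} (hK : 1 ≤ K) (hN : 1 ≤ N)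
    (A : Fin K → Matrix (Fin M) (Fin N) ℝ) (b : Fin M → ℝ)
    (σ : Fin K → ℝ) (hσ : ∀ k, 0 < σ k)
    (X : Fin K → Set (Fin N → ℝ)) (h : Fin K → (Fin N → ℝ) → ℝ)
    (hh : ∀ k, ConvexOn ℝ (X k) (h k))
    (x : ℕ → Fin K → Fin N → ℝ) (hx0 : ∀ k, x 0 k ∈ X k)
    (hstep : ∀ r : ℕ, BCDStep A b h X (x r) (x (r + 1)))
    (y : Fin K → Fin N → ℝ) (hy : ∀ k, y k ∈ X k) (R0 : ℝ)
    (hR0 : ∀ z : Fin K → Fin N → ℝ, (∀ k, z k ∈ X k) → fq A b h z ≤ fq A b h (x 0) →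
      √(∑ k, sqnorm (z k - y k)) ≤ R0)
    (r : ℕ) :
    fq A b h (x (r + 1)) - fq A b h y ≤
      R0 * (1 / minOf hK σ) * Real.log (2 * (N : ℝ) * (K : ℝ)) *
        (lamMaxBlock A + maxOf hK (fun k => lamMaxQ (A k))) *
        √(∑ k, σ k ^ 2 * sqnorm (x (r + 1) k - x r k)) := by
  have hdist := hR0 (x (r + 1)) (BCDStep.iterate_mem hx0 hstep _)
    (BCDStep.antitone_fq_iterate hx0 hstep (Nat.zero_le _))
  have hincr := sqrt_sum_le_one_div_minOf_mul hK hσ fun k => sqnorm_nonneg (x (r + 1) k - x r k)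
  have hlog : Real.log (2 * (K : ℝ)) ≤ Real.log (2 * (N : ℝ) * (K : ℝ)) := by
    gcongr
    exact le_mul_of_one_le_right zero_le_two (by exact_mod_cast hN)
  have hlog_nonneg := (Real.log_nonneg (by norm_cast; omega)).trans hlog
  have hL := lamMaxBlock_nonneg A
  have hLmax := maxOf_nonneg hK fun k => lamMaxQ_nonneg (A k)
  have hLle := le_add_of_nonneg_right (a := lamMaxBlock A) hLmax
  have hR0_nonneg : 0 ≤ R0 := (Real.sqrt_nonneg _).trans hdist
  calc _ ≤ Real.log (2 * (K : ℝ)) * lamMaxBlock A *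
        (√(∑ k, sqnorm (x (r + 1) k - y k)) * √(∑ k, sqnorm (x (r + 1) k - x r k))) :=
        (hstep r).fq_sub_fq_le_log_mul hK hh hy
    _ ≤ Real.log (2 * (N : ℝ) * (K : ℝ)) *
        (lamMaxBlock A + maxOf hK (fun k => lamMaxQ (A k))) *
        (R0 * (1 / minOf hK σ * √(∑ k, σ k ^ 2 * sqnorm (x (r + 1) k - x r k)))) := by
        gcongr
    _ = _ := by ring

/-- Lemma 4, case 1: cost-to-go estimate of cyclic exact BCD
when each `A_k` has full column rank with `λ_min(A_kᵀA_k) ≥ σ_k²`. -/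
theorem bcd_cost_to_go_col_rank {K M N : ℕ} (hK : 1 ≤ K) (hM : 1 ≤ M) (hN : 1 ≤ N)
    (hNK : 3 ≤ N * K)
    (A : Fin K → Matrix (Fin M) (Fin N) ℝ) (b : Fin M → ℝ)
    (σ : Fin K → ℝ) (hσ : ∀ k, 0 < σ k) (hrank : ∀ k, σ k ^ 2 ≤ lamMinQ (A k))
    (X : Fin K → Set (Fin N → ℝ)) (h : Fin K → (Fin N → ℝ) → ℝ)
    (hXne : ∀ k, (X k).Nonempty) (hXcl : ∀ k, IsClosed (X k))
    (hXcv : ∀ k, Convex ℝ (X k))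
    (hhcv : ∀ k, ConvexOn ℝ Set.univ (h k))
    (hhlsc : ∀ k, LowerSemicontinuous (h k))
    (x : ℕ → Fin K → Fin N → ℝ) (hx0 : ∀ k, x 0 k ∈ X k)
    (hstep : ∀ r : ℕ, BCDStep A b h X (x r) (x (r + 1)))
    (xstar : Fin K → Fin N → ℝ) (hxstarX : ∀ k, xstar k ∈ X k)
    (hxstar : ∀ y : Fin K → Fin N → ℝ, (∀ k, y k ∈ X k) → fq A b h xstar ≤ fq A b h y)
    (R0 : ℝ)
    (hR0 : ∀ z : Fin K → Fin N → ℝ, (∀ k, z k ∈ X k) → fq A b h z ≤ fq A b h (x 0) →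
      ∀ y : Fin K → Fin N → ℝ, (∀ k, y k ∈ X k) →
        (∀ z' : Fin K → Fin N → ℝ, (∀ k, z' k ∈ X k) → fq A b h y ≤ fq A b h z') →
        Real.sqrt (∑ k, sqnorm (z k - y k)) ≤ R0)
    (r : ℕ) :
    fq A b h (x (r + 1)) - fq A b h xstar ≤
      R0 * (1 / minOf hK σ) * Real.log (2 * (N : ℝ) * (K : ℝ)) *
        (lamMaxBlock A + maxOf hK (fun k => lamMaxQ (A k))) *
        Real.sqrt (∑ k, σ k ^ 2 * sqnorm (x (r + 1) k - x r k)) :=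
  bcd_cost_to_go_col_rank_general hK hN A b σ hσ X h
    (fun k => (hhcv k).subset (Set.subset_univ _) (hXcv k)) x hx0 hstep xstar hxstarX R0
    (fun z hz hle => hR0 z hz hle xstar hxstarX hxstar) r
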